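/- Let a < b be reals and f, g : [a,b] → ℝ be Lipschitz with f strictly decreasing and g non-decreasing. Then h : [a,b] → ℝ defined by h(s) := min{f(s), g(s)} is Lipschitz; moreover, if F ⊂ ℝ is such that f'(s) ∈ F for almost every s ∈ [a,b], and G ⊂ ℝ is such that g'(s) ∈ G for almost every s ∈ [a,b], then h'(s) ∈ F ∪ G for almost every s ∈ [a,b]. -/

import Mathlib

open MeasureTheory

/-!
The minimum `h` of two Lipschitz functions `f` and `g` is Lipschitz, so by Rademacher's theorem
almost every point is a common point of differentiability of `f`, `g` and `h`. Since `h ≤ f` and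
`h ≤ g`, with equality in one of the two at each point, Fermat's theorem applied to `f - h` or
`g - h` shows that the derivative of `h` there is the derivative of `f` or of `g`. Fermat's theorem
within a set needs the set to approach the point from every direction, which it does at its
Lebesgue density points.
-/

open Filter Metric Set
open scoped NNReal Pointwise Topology

theorem lipschitzOnWith_min {α : Type*} [PseudoEMetricSpace α] {f g : α → ℝ} {s : Set α}
    {K L : ℝ≥0} (hf : LipschitzOnWith K f s) (hg : LipschitzOnWith L g s) :
    LipschitzOnWith (max K L) (fun x => min (f x) (g x)) s := by
  simpa only [Function.comp_def, one_mul] using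
    lipschitzWith_min.comp_lipschitzOnWith (hf.prodMk hg)

section Fermat

variable {E : Type*} [NormedAddCommGroup E] [NormedSpace ℝ E] {f g h : E → ℝ} {s : Set E} {x : E}

theorem fderivWithin_eq_of_eventuallyLE (hs : posTangentConeAt s x = univ)
    (hh : DifferentiableWithinAt ℝ h s x) (hf : DifferentiableWithinAt ℝ f s x)
    (hle : h ≤ᶠ[𝓝[s] x] f) (heq : h x = f x) :
    fderivWithin ℝ h s x = fderivWithin ℝ f s x := by
  have hmin : IsLocalMinOn (f - h) s x := by
    filter_upwards [hle] with y hy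
    simpa only [Pi.sub_apply, heq, sub_self, sub_nonneg] using hy
  have hdiff := hf.hasFDerivWithinAt.sub hh.hasFDerivWithinAt
  refine (sub_eq_zero.mp (ContinuousLinearMap.ext fun v => ?_)).symm
  exact hmin.hasFDerivWithinAt_eq_zero hdiff (hs ▸ mem_univ v) (hs ▸ mem_univ (-v))

theorem fderivWithin_min_eq_or_eq (hs : posTangentConeAt s x = univ)
    (hf : DifferentiableWithinAt ℝ f s x) (hg : DifferentiableWithinAt ℝ g s x)
    (hmin : DifferentiableWithinAt ℝ (fun y => min (f y) (g y)) s x) :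
    fderivWithin ℝ (fun y => min (f y) (g y)) s x = fderivWithin ℝ f s x ∨
      fderivWithin ℝ (fun y => min (f y) (g y)) s x = fderivWithin ℝ g s x :=
  (min_choice (f x) (g x)).imp
    (fderivWithin_eq_of_eventuallyLE hs hmin hf (.of_forall fun _ => min_le_left _ _))
    (fderivWithin_eq_of_eventuallyLE hs hmin hg (.of_forall fun _ => min_le_right _ _))

end Fermat

section Haar

variable {E : Type*} [NormedAddCommGroup E] [NormedSpace ℝ E] [FiniteDimensional ℝ E]
  [MeasurableSpace E] [BorelSpace E] (μ : Measure E) [μ.IsAddHaarMeasure]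

theorem posTangentConeAt_eq_univ_of_density_one {s : Set E} {x : E}
    (hx : Tendsto (fun r => μ (s ∩ closedBall x r) / μ (closedBall x r)) (𝓝[>] 0) (𝓝 1)) :
    posTangentConeAt s x = univ := by
  refine eq_univ_of_forall fun v => ?_
  rw [posTangentConeAt, tangentConeAt_eq_biInter_closure]
  refine mem_iInter₂.mpr fun U hU => Metric.mem_closure_iff.mpr fun ε hε => ?_
  have hmeets : ∀ᶠ r in 𝓝[>] (0 : ℝ), (s ∩ ({x} + r • ball v ε)).Nonempty :=
    Measure.eventually_nonempty_inter_smul_of_density_one μ s x hx _ measurableSet_ball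
      (measure_ball_pos μ v hε).ne'
  have hsmall : ∀ᶠ r in 𝓝[>] (0 : ℝ), {0} + r • ball v ε ⊆ U :=
    nhdsWithin_le_nhds (eventually_singleton_add_smul_subset isBounded_ball hU)
  obtain ⟨r, ⟨y, hys, hy⟩, hrU, hr : 0 < r⟩ :=
    (hmeets.and (hsmall.and self_mem_nhdsWithin)).exists
  obtain ⟨w, hw, rfl⟩ : ∃ w ∈ ball v ε, x + r • w = y := by
    simpa only [singleton_add, ← image_smul, image_image, mem_image] using hy
  have hwU : r • w ∈ U := hrU ⟨0, rfl, r • w, smul_mem_smul_set hw, zero_add _⟩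
  lift r to ℝ≥0 using hr.le
  exact ⟨w, ⟨r⁻¹, mem_univ _, r • w, ⟨hwU, hys⟩, inv_smul_smul₀ (NNReal.coe_pos.mp hr).ne' w⟩,
    mem_ball'.mp hw⟩

theorem ae_restrict_posTangentConeAt_eq_univ (s : Set E) :
    ∀ᵐ x ∂μ.restrict s, posTangentConeAt s x = univ :=
  (Besicovitch.ae_tendsto_measure_inter_div μ s).mono fun _ =>
    posTangentConeAt_eq_univ_of_density_one μ

variable {μ}

theorem ae_fderivWithin_min_eq_or_eq {f g : E → ℝ} {s : Set E} {K L : ℝ≥0} (hs : MeasurableSet s)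
    (hf : LipschitzOnWith K f s) (hg : LipschitzOnWith L g s) :
    ∀ᵐ x ∂μ.restrict s,
      fderivWithin ℝ (fun y => min (f y) (g y)) s x = fderivWithin ℝ f s x ∨
        fderivWithin ℝ (fun y => min (f y) (g y)) s x = fderivWithin ℝ g s x := by
  filter_upwards [ae_restrict_posTangentConeAt_eq_univ μ s, hf.ae_differentiableWithinAt hs,
    hg.ae_differentiableWithinAt hs, (lipschitzOnWith_min hf hg).ae_differentiableWithinAt hs]
    with x using fderivWithin_min_eq_or_eq

theorem min_lipschitz_deriv_mem_union_anti_general {f g : E → ℝ} {s : Set E}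
    {F G : Set (E →L[ℝ] ℝ)} (hs : MeasurableSet s)
    (hf : ∃ K : ℝ≥0, LipschitzOnWith K f s) (hg : ∃ K : ℝ≥0, LipschitzOnWith K g s)
    (hF : ∀ᵐ x ∂μ.restrict s, fderivWithin ℝ f s x ∈ F)
    (hG : ∀ᵐ x ∂μ.restrict s, fderivWithin ℝ g s x ∈ G) :
    (∃ K : ℝ≥0, LipschitzOnWith K (fun x => min (f x) (g x)) s) ∧
      ∀ᵐ x ∂μ.restrict s, fderivWithin ℝ (fun y => min (f y) (g y)) s x ∈ F ∪ G := by
  obtain ⟨K, hK⟩ := hf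
  obtain ⟨L, hL⟩ := hg
  refine ⟨⟨max K L, lipschitzOnWith_min hK hL⟩, ?_⟩
  filter_upwards [hF, hG, ae_fderivWithin_min_eq_or_eq hs hK hL] with x hxF hxG hx
  rcases hx with hx | hx
  · exact .inl (by rwa [hx])
  · exact .inr (by rwa [hx])

end Haar

/-- Proposition 3 (decreasing case): if `f, g : [a,b] → ℝ` are Lipschitz, `f` is strictly
decreasing and `g` is non-decreasing, then `h := min{f,g}` is Lipschitz on `[a,b]`;
moreover, if `f'(s) ∈ F` for a.e. `s ∈ [a,b]` and `g'(s) ∈ G` for a.e. `s ∈ [a,b]`,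
then `h'(s) ∈ F ∪ G` for a.e. `s ∈ [a,b]`. -/
theorem min_lipschitz_deriv_mem_union_anti
    (a b : ℝ) (hab : a < b) (f g : ℝ → ℝ) (F G : Set ℝ)
    (hf : ∃ K : NNReal, LipschitzOnWith K f (Set.Icc a b))
    (hg : ∃ K : NNReal, LipschitzOnWith K g (Set.Icc a b))
    (hfm : StrictAntiOn f (Set.Icc a b))
    (hgm : MonotoneOn g (Set.Icc a b))
    (hF : ∀ᵐ s ∂(volume.restrict (Set.Icc a b)),
      derivWithin f (Set.Icc a b) s ∈ F)
    (hG : ∀ᵐ s ∂(volume.restrict (Set.Icc a b)),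
      derivWithin g (Set.Icc a b) s ∈ G) :
    (∃ K : NNReal, LipschitzOnWith K (fun s => min (f s) (g s)) (Set.Icc a b)) ∧
    (∀ᵐ s ∂(volume.restrict (Set.Icc a b)),
      derivWithin (fun s => min (f s) (g s)) (Set.Icc a b) s ∈ F ∪ G) :=
  -- `derivWithin f s x` unfolds to `fderivWithin ℝ f s x 1`.
  min_lipschitz_deriv_mem_union_anti_general (F := (· 1) ⁻¹' F) (G := (· 1) ⁻¹' G)
    measurableSet_Icc hf hg hF hG
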